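/- arXiv:2511.11467 — 5 statements merged into one kernel-verified Lean document; each statement's English description precedes it below -/
import Mathlib

section
/- Let R be a commutative ring, let a, b ∈ R, and let l ≥ 1. Let N_l be the l × l tridiagonal matrix over R whose diagonal entries all equal a + b, whose entries on the superdiagonal (positions (i, i+1)) all equal a·b, whose entries on the subdiagonal (positions (i+1, i)) all equal 1, and all of whose other entries are 0. Then det N_l = ∑_{i=0}^{l} a^i · b^{l−i}. -/
/-!
Laplace expansion along the first row, then along the first column of the second minor, gives
the continuant recurrence `det N_{n+2} = (a + b) det N_{n+1} - a b det N_n`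
(`det_tridiag_add_two`). The sums `S_n = ∑ a^i b^(n-i)` satisfy `S_{n+1} = b S_n + a^(n+1)`, hence
the same recurrence, and the two sequences agree at `n = 0, 1`.
-/

/-- The `l × l` tridiagonal matrix with diagonal `a + b`, superdiagonal `a * b` and
subdiagonal `1`. -/
def tridiag {R : Type*} [CommRing R] (a b : R) (l : ℕ) : Matrix (Fin l) (Fin l) R :=
  Matrix.of fun i j =>
    if (i : ℕ) = (j : ℕ) then a + b
    else if (j : ℕ) = (i : ℕ) + 1 then a * b
    else if (i : ℕ) = (j : ℕ) + 1 then 1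
    else 0

lemma tridiag_submatrix_succ {R : Type*} [CommRing R] (a b : R) (n : ℕ) :
    (tridiag a b (n + 1)).submatrix Fin.succ Fin.succ = tridiag a b n := by
  ext i j
  simp [tridiag]

/-- The minor of `N_{n+2}` at position `(0, 1)` has first column `(1, 0, …, 0)`. -/
lemma det_tridiag_minor {R : Type*} [CommRing R] (a b : R) (n : ℕ) :
    ((tridiag a b (n + 2)).submatrix Fin.succ (Fin.succAbove 1)).det = (tridiag a b n).det := by
  rw [Matrix.det_succ_column_zero, Fin.sum_univ_succ, Finset.sum_eq_zero]
  · have h : ((tridiag a b (n + 2)).submatrix Fin.succ (Fin.succAbove 1)).submatrix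
        (Fin.succAbove 0) Fin.succ = tridiag a b n := by
      ext i j
      have h1 : (Fin.succAbove 1 j.succ : Fin (n + 2)) = j.succ.succ := by
        rw [← Fin.succ_zero_eq_one, Fin.succ_succAbove_succ, Fin.succAbove_zero]
      simp [tridiag, h1]
    rw [h]
    simp [tridiag]
  · intro i _
    simp [tridiag]

lemma det_tridiag_add_two {R : Type*} [CommRing R] (a b : R) (n : ℕ) :
    (tridiag a b (n + 2)).det =
      (a + b) * (tridiag a b (n + 1)).det - a * b * (tridiag a b n).det := by
  rw [Matrix.det_succ_row_zero, Fin.sum_univ_succ, Fin.sum_univ_succ, Finset.sum_eq_zero]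
  · rw [Fin.succ_zero_eq_one, det_tridiag_minor, Fin.succAbove_zero, tridiag_submatrix_succ]
    simp [tridiag]
    ring
  · intro i _
    simp [tridiag]

lemma sum_powers_succ {R : Type*} [CommRing R] (a b : R) (n : ℕ) :
    ∑ i ∈ Finset.range (n + 2), a ^ i * b ^ (n + 1 - i) =
      b * ∑ i ∈ Finset.range (n + 1), a ^ i * b ^ (n - i) + a ^ (n + 1) := by
  rw [Finset.sum_range_succ, Finset.mul_sum]
  congr 1
  · refine Finset.sum_congr rfl fun i hi => ?_
    rw [Nat.succ_sub (Finset.mem_range_succ_iff.mp hi), pow_succ]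
    ring
  · simp

lemma det_tridiag {R : Type*} [CommRing R] (a b : R) (n : ℕ) :
    (tridiag a b n).det = ∑ i ∈ Finset.range (n + 1), a ^ i * b ^ (n - i) := by
  induction n using Nat.twoStepInduction with
  | zero => simp
  | one => simp [tridiag, Finset.sum_range_succ, add_comm]
  | more n ih0 ih1 =>
    rw [det_tridiag_add_two, ih0, ih1, sum_powers_succ a b (n + 1), sum_powers_succ a b n]
    ring

/-- Determinant of the `l × l` tridiagonal matrix with diagonal `a + b`,
superdiagonal `a * b` and subdiagonal `1`:
`det N_l = ∑_{i=0}^{l} a^i * b^(l - i)`. -/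
theorem det_tridiagonal_sum_powers {R : Type*} [CommRing R] (a b : R) (l : ℕ)
    (hl : 1 ≤ l) (N : Matrix (Fin l) (Fin l) R)
    (hN : ∀ i j : Fin l,
      N i j =
        if (i : ℕ) = (j : ℕ) then a + b
        else if (j : ℕ) = (i : ℕ) + 1 then a * b
        else if (i : ℕ) = (j : ℕ) + 1 then 1
        else 0) :
    N.det = ∑ i ∈ Finset.range (l + 1), a ^ i * b ^ (l - i) := by
  have h : N = tridiag a b l := Matrix.ext hN
  rw [h, det_tridiag]
end

section
/- Let k ≥ 1, let S ⊆ {1, …, k}, and for each i ∈ S let d_i be a positive integer. In the polynomial ring ℤ[x_1, …, x_k], set ŷ_i := ∑_{u ∈ {1,…,k}, u ≠ i} x_u. Then the support of the product ∏_{i ∈ S} ŷ_i^{d_i − 1} (i.e., the set of exponent vectors α ∈ ℕ^k whose monomial x^α has nonzero coefficient) is exactly the set of all α ∈ ℕ^k such that ∑_{u=1}^k α_u = ∑_{i ∈ S} (d_i − 1) and, for every i ∈ S, α_i ≤ ∑_{j ∈ S, j ≠ i} (d_j − 1). -/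
open MvPolynomial Finset

/-!
Write `e i = d i - 1` for `i ∈ S` and `e i = 0` otherwise, and let `N = ∑ e`. The claim becomes:
`x^α` occurs in `∏ ŷ_i ^ e_i` iff `∑ α = N` and `α_i + e_i ≤ N` for all `i`. All coefficients are
nonnegative, so one may work over `ℕ`, where nothing cancels: `x^α` occurs in `ŷ_i * p` iff
`x^α / x_u` occurs in `p` for some `u ≠ i` (`coeff_hat_mul_ne_zero`).

The proof is by induction on `N`. Necessity is immediate from this recursion. For sufficiency
one needs `i ≠ u` with `e_i > 0` and `α_u > 0` such that lowering `e_i` and `α_u` by one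
preserves the inequalities, i.e. every tight index (`α_j + e_j = N`) is `i` or `u`. Since
`∑ (α_j + e_j) = 2N`, at most two indices are tight, and such a pair always exists
(`exists_step`).
-/

/-- The product `∏ i, ŷ_i ^ e i`, with coefficients in `ℕ` so that no cancellation can occur. -/
noncomputable def hatProd {k : ℕ} (e : Fin k →₀ ℕ) : MvPolynomial (Fin k) ℕ :=
  ∏ i, (∑ u ∈ Finset.univ.erase i, X u) ^ e i

lemma hatProd_add_single {k : ℕ} (e : Fin k →₀ ℕ) (i : Fin k) :
    hatProd (e + Finsupp.single i 1) = (∑ u ∈ Finset.univ.erase i, X u) * hatProd e := by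
  unfold hatProd
  simp only [Finsupp.add_apply, pow_add, Finset.prod_mul_distrib]
  rw [mul_comm]
  congr 1
  rw [Finset.prod_eq_single i]
  · simp
  · intro b _ hb
    simp [hb.symm]
  · simp

lemma coeff_hat_mul_ne_zero {k : ℕ} (i : Fin k) (p : MvPolynomial (Fin k) ℕ)
    (α : Fin k →₀ ℕ) :
    coeff α ((∑ u ∈ Finset.univ.erase i, X u) * p) ≠ 0 ↔
      ∃ u β, u ≠ i ∧ α = β + Finsupp.single u 1 ∧ coeff β p ≠ 0 := by
  rw [Finset.sum_mul, coeff_sum, Ne, Finset.sum_eq_zero_iff]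
  push Not
  constructor
  · rintro ⟨u, hu, h⟩
    rw [coeff_X_mul'] at h
    split_ifs at h with hs
    · refine ⟨u, α - Finsupp.single u 1, by simpa using hu, ?_, h⟩
      rw [tsub_add_cancel_of_le]
      rw [Finsupp.single_le_iff]
      have := Finsupp.mem_support_iff.1 hs
      omega
    · exact absurd rfl h
  · rintro ⟨u, β, hu, rfl, h⟩
    refine ⟨u, by simpa using hu, ?_⟩
    rwa [add_comm, coeff_X_mul]

lemma two_le_sum {k : ℕ} (f : Fin k → ℕ) {a b : Fin k} (h : a ≠ b) : f a + f b ≤ ∑ i, f i := by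
  rw [← Finset.sum_pair h]
  exact Finset.sum_le_sum_of_subset (Finset.subset_univ _)

lemma exists_ne_pos {k : ℕ} (f : Fin k → ℕ) (a : Fin k) (h : f a < ∑ i, f i) :
    ∃ i, i ≠ a ∧ 0 < f i := by
  by_contra! hc
  rw [Finset.sum_eq_single a (fun b _ hb => by have := hc b hb; omega) (by simp)] at h
  exact lt_irrefl _ h

/-- If the index `a` is tight and `f a > 0`, then `g` is positive at some index `b ≠ a` such that
no third index is tight. -/
lemma exists_partner {k : ℕ} (f g : Fin k → ℕ) (N : ℕ)
    (hf : ∑ i, f i = N) (hg : ∑ i, g i = N) (a : Fin k)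
    (ha : f a + g a = N) (hpos : 0 < f a) :
    ∃ b, b ≠ a ∧ 0 < g b ∧ ∀ j, j ≠ a → j ≠ b → f j + g j < N := by
  by_cases hb : ∃ b, b ≠ a ∧ N ≤ f b + g b
  · obtain ⟨b, hba, hb⟩ := hb
    have h1 := two_le_sum f hba
    have h2 := two_le_sum g hba
    refine ⟨b, hba, by omega, fun j hja hjb => ?_⟩
    -- The indices `a` and `b` already exhaust the total `2N`, so `f` and `g` vanish at `j`.
    have h3 : ∑ i ∈ {j, a, b}, (f i + g i) ≤ ∑ i, (f i + g i) :=
      Finset.sum_le_sum_of_subset (Finset.subset_univ _)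
    rw [Finset.sum_insert (by simp [hja, hjb]), Finset.sum_pair hba.symm,
      Finset.sum_add_distrib] at h3
    omega
  · push Not at hb
    obtain ⟨b, hba, hgb⟩ := exists_ne_pos g a (by omega)
    exact ⟨b, hba, hgb, fun j hja _ => hb j hja⟩

/-- One may lower `α` at `u` and `e` at `i ≠ u` so that all the inequalities survive: every
tight index is `i` or `u`. -/
lemma exists_step {k : ℕ} (α e : Fin k → ℕ) (N : ℕ) (hN : 0 < N)
    (hα : ∑ i, α i = N) (he : ∑ i, e i = N) (h : ∀ i, α i + e i ≤ N) :
    ∃ i u, u ≠ i ∧ 0 < e i ∧ 0 < α u ∧ ∀ j, j ≠ i → j ≠ u → α j + e j < N := by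
  by_cases ht : ∃ a, α a + e a = N
  · obtain ⟨a, ha⟩ := ht
    by_cases hpos : 0 < α a
    · obtain ⟨b, hba, hb, hj⟩ := exists_partner α e N hα he a ha hpos
      exact ⟨b, a, hba.symm, hb, hpos, fun j h1 h2 => hj j h2 h1⟩
    · obtain ⟨b, hba, hb, hj⟩ := exists_partner e α N he hα a (by omega) (by omega)
      exact ⟨a, b, hba, by omega, hb, fun j h1 h2 => by have := hj j h1 h2; omega⟩
  · push Not at ht
    have : ∃ i, 0 < e i := by
      by_contra! hc
      rw [Finset.sum_eq_zero (fun i _ => by have := hc i; omega)] at he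
      omega
    obtain ⟨i, hi⟩ := this
    obtain ⟨u, hu, hup⟩ := exists_ne_pos α i (by have := h i; omega)
    exact ⟨i, u, hu, hi, hup, fun j _ _ => lt_of_le_of_ne (h j) (ht j)⟩

lemma sum_add_single {k : ℕ} (β : Fin k →₀ ℕ) (u : Fin k) :
    ∑ j, (β + Finsupp.single u 1 : Fin k →₀ ℕ) j = ∑ j, β j + 1 := by
  simp [Finset.sum_add_distrib, Finsupp.single_apply]

lemma exists_eq_add_single {k : ℕ} (e : Fin k →₀ ℕ) (i : Fin k) (h : 0 < e i) :
    ∃ e', e = e' + Finsupp.single i 1 :=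
  ⟨e - Finsupp.single i 1, (tsub_add_cancel_of_le (by rw [Finsupp.single_le_iff]; omega)).symm⟩

/-- The homogeneous form of the result: with `e` extended by zero outside `S`, the condition at `i`
reads `α i + e i ≤ N` and is automatic where `e i = 0`. -/
theorem coeff_hatProd_ne_zero {k : ℕ} (N : ℕ) : ∀ (e α : Fin k →₀ ℕ), ∑ i, e i = N →
    (coeff α (hatProd e) ≠ 0 ↔ ∑ i, α i = N ∧ ∀ i, α i + e i ≤ N) := by
  induction N with
  | zero =>
    intro e α he
    have he0 : e = 0 := by ext i; simpa using (Finset.sum_eq_zero_iff.1 he) i (Finset.mem_univ _)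
    subst he0
    have h1 : hatProd (0 : Fin k →₀ ℕ) = 1 := by simp [hatProd]
    rw [h1, coeff_one]
    constructor
    · intro h
      have h0 : 0 = α := by by_contra hc; simp [hc] at h
      subst h0
      simp
    · rintro ⟨h, -⟩
      have h0 : α = 0 := by ext i; simpa using (Finset.sum_eq_zero_iff.1 h) i (Finset.mem_univ _)
      simp [h0]
  | succ N ih =>
    intro e α he
    constructor
    · intro h
      obtain ⟨i, hi⟩ : ∃ i, 0 < e i := by
        by_contra! hc
        rw [Finset.sum_eq_zero (fun i _ => by have := hc i; omega)] at he
        omega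
      obtain ⟨e', rfl⟩ := exists_eq_add_single e i hi
      rw [hatProd_add_single, coeff_hat_mul_ne_zero] at h
      obtain ⟨u, β, hu, rfl, hβ⟩ := h
      rw [sum_add_single] at he ⊢
      obtain ⟨h1, h2⟩ := (ih e' β (by omega)).1 hβ
      refine ⟨by omega, fun j => ?_⟩
      have := h2 j
      simp only [Finsupp.add_apply, Finsupp.single_apply]
      split_ifs <;> omega
    · rintro ⟨hα, h⟩
      obtain ⟨i, u, hu, hi, hup, hj⟩ := exists_step α e (N + 1) (by omega) hα he h
      obtain ⟨e', rfl⟩ := exists_eq_add_single e i hi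
      obtain ⟨β, rfl⟩ := exists_eq_add_single α u hup
      rw [sum_add_single] at he hα
      rw [hatProd_add_single, coeff_hat_mul_ne_zero]
      refine ⟨u, β, hu, rfl, (ih e' β (by omega)).2 ⟨by omega, fun j => ?_⟩⟩
      have h1 := h j
      have h2 := hj j
      simp only [Finsupp.add_apply, Finsupp.single_apply] at h1 h2
      by_cases hji : i = j
      · simp only [hji, if_true] at h1; omega
      · by_cases hju : u = j
        · simp only [hju, if_true] at h1; omega
        · have := h2 (Ne.symm hji) (Ne.symm hju); omega

/-- The support of `∏_{i ∈ S} (∑_{u ≠ i} x_u)^{d_i - 1}` in `ℤ[x_1, …, x_k]`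
consists exactly of the exponent vectors `α` of total degree `∑_{i ∈ S} (d_i - 1)`
satisfying `α_i ≤ ∑_{j ∈ S, j ≠ i} (d_j - 1)` for every `i ∈ S`. -/
theorem support_prod_hat_pow (k : ℕ) (hk : 1 ≤ k) (S : Finset (Fin k))
    (d : Fin k → ℕ) (hd : ∀ i ∈ S, 1 ≤ d i) (α : Fin k →₀ ℕ) :
    α ∈ (∏ i ∈ S,
        (∑ u ∈ Finset.univ.erase i, (X u : MvPolynomial (Fin k) ℤ)) ^ (d i - 1)).support ↔
      (∑ u, α u = ∑ i ∈ S, (d i - 1)) ∧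
        ∀ i ∈ S, α i ≤ ∑ j ∈ S.erase i, (d j - 1) := by
  set e : Fin k →₀ ℕ :=
    Finsupp.equivFunOnFinite.symm (fun i => if i ∈ S then d i - 1 else 0) with he
  have hei : ∀ i, e i = if i ∈ S then d i - 1 else 0 := fun i => by simp [he]
  have hsum : ∑ i, e i = ∑ i ∈ S, (d i - 1) := by
    simp [hei]
  have hprod : (∏ i ∈ S,
      (∑ u ∈ Finset.univ.erase i, (X u : MvPolynomial (Fin k) ℤ)) ^ (d i - 1)) =
      MvPolynomial.map (Nat.castRingHom ℤ) (hatProd e) := by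
    simp only [hatProd, map_prod, map_pow, map_sum, map_X, hei]
    rw [← Finset.prod_subset (Finset.subset_univ S)]
    · exact Finset.prod_congr rfl fun i hi => by rw [if_pos hi]
    · intro i _ hi
      rw [if_neg hi, pow_zero]
  rw [hprod, mem_support_iff, coeff_map]
  have hc : (Nat.castRingHom ℤ) (coeff α (hatProd e)) ≠ 0 ↔ coeff α (hatProd e) ≠ 0 := by simp
  rw [hc, coeff_hatProd_ne_zero _ e α hsum]
  refine and_congr_right fun hα => ?_
  constructor
  · intro h i hi
    have h1 := h i
    rw [hei, if_pos hi, ← Finset.add_sum_erase S _ hi] at h1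
    omega
  · intro h i
    rw [hei]
    split_ifs with hi
    · have h1 := h i hi
      rw [← Finset.add_sum_erase S _ hi]
      omega
    · rw [← hα]
      exact Finset.single_le_sum (f := fun i => α i) (fun _ _ => Nat.zero_le _) (Finset.mem_univ i)
end

section
/- Let k ≥ s ≥ 2 be integers and let d_1, …, d_s be positive integers. Let α ∈ ℕ^k satisfy ∑_{u=1}^k α_u = ∑_{i=1}^{s} (d_i − 1) and α_i ≤ ∑_{j ∈ {1,…,s}, j ≠ i} (d_j − 1) for every i ∈ {1, …, s}. Then there exist ᾱ, α̃ ∈ ℕ^k with α = ᾱ + α̃ such that: ∑_{u=1}^k α̃_u = d_s − 1 and α̃_s = 0; and ∑_{u=1}^k ᾱ_u = ∑_{i=1}^{s−1} (d_i − 1) and ᾱ_i ≤ ∑_{j ∈ {1,…,s−1}, j ≠ i} (d_j − 1) for every i ∈ {1, …, s−1}. -/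
/-!
Write `e_i = d_i - 1`, `E = ∑_{i < s-1} e_i` and `m = e_{s-1}`. The vector `α̃` has to satisfy
`l ≤ α̃ ≤ α`, where `l_i = (α_i - (E - e_i))⁺` for `i < s - 1` and `l_i = 0` otherwise, with
`α̃_{s-1} = 0` and total `m`. By discrete interpolation
(`exists_between_with_sum`) such a vector exists as soon as `∑ l ≤ m ≤ ∑_{u ≠ s-1} α_u`.
The upper bound is the hypothesis `α_{s-1} ≤ E`. The lower bound
(`sum_truncated_excess_le`) depends on the number of indices with positive excess: one such
index is handled by the hypothesis on `α_i`, and for a set `T` of at least two,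
`∑_T l + |T| E = ∑_T α + ∑_T e ≤ (E + m) + E`.
-/

open Finset

/-- Discrete interpolation: the sum over `S` of a vector between `l` and `a`, equal to `l` off
`S`, takes every value between `∑ l` and `∑ a`. -/
lemma exists_between_with_sum (S : Finset ℕ) (l a : ℕ → ℕ) (hla : ∀ u, l u ≤ a u) (m : ℕ)
    (hlm : ∑ u ∈ S, l u ≤ m) (hma : m ≤ ∑ u ∈ S, a u) :
    ∃ t : ℕ → ℕ, (∀ u, l u ≤ t u ∧ t u ≤ a u) ∧ (∀ u, u ∉ S → t u = l u) ∧
      ∑ u ∈ S, t u = m := by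
  induction m, hlm using Nat.le_induction with
  | base => exact ⟨l, fun u => ⟨le_rfl, hla u⟩, fun _ _ => rfl, rfl⟩
  | succ m _ ih =>
    obtain ⟨t, ht, htS, hsum⟩ := ih (by omega)
    obtain ⟨v, hv, hlt⟩ : ∃ v ∈ S, t v < a v :=
      Finset.exists_lt_of_sum_lt (by omega)
    refine ⟨fun u => t u + if u = v then 1 else 0, fun u => ?_, fun u hu => ?_, ?_⟩
    · have := ht u
      by_cases h : u = v
      · subst h; simp; omega
      · simpa [h] using this
    · have h : u ≠ v := fun h => hu (h ▸ hv)
      simpa [h] using htS u hu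
    · simp [Finset.sum_add_distrib, hv, hsum]

/-- The coordinates of `a` exceed the bounds `E - e_i`, `E = ∑ e`, by at most `m` in total. -/
lemma sum_truncated_excess_le (S : Finset ℕ) (e a : ℕ → ℕ) (m : ℕ)
    (hsum : ∑ i ∈ S, a i ≤ ∑ i ∈ S, e i + m)
    (hle : ∀ i ∈ S, a i ≤ (∑ j ∈ S, e j - e i) + m) :
    ∑ i ∈ S, (a i - (∑ j ∈ S, e j - e i)) ≤ m := by
  set E := ∑ j ∈ S, e j with hE
  set T := S.filter (fun i => E - e i < a i) with hT
  have hTS : T ⊆ S := Finset.filter_subset _ _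
  have hres : ∑ i ∈ S, (a i - (E - e i)) = ∑ i ∈ T, (a i - (E - e i)) := by
    refine (Finset.sum_subset hTS fun i hi hiT => ?_).symm
    have : ¬ (E - e i < a i) := fun h => hiT (Finset.mem_filter.2 ⟨hi, h⟩)
    omega
  rw [hres]
  rcases lt_or_ge T.card 2 with hc | hc
  · rcases Nat.lt_succ_iff_lt_or_eq.1 hc with h0 | h1
    · have : T = ∅ := Finset.card_eq_zero.1 (by omega)
      simp [this]
    · obtain ⟨i, hi⟩ := Finset.card_eq_one.1 h1
      have := hle i (hTS (by simp [hi]))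
      rw [hi, Finset.sum_singleton]
      omega
  · have hkey : ∑ i ∈ T, (a i - (E - e i)) + T.card * E = ∑ i ∈ T, a i + ∑ i ∈ T, e i := by
      rw [← smul_eq_mul, ← Finset.sum_const, ← Finset.sum_add_distrib,
        ← Finset.sum_add_distrib]
      refine Finset.sum_congr rfl fun i hi => ?_
      have h1 : e i ≤ E := Finset.single_le_sum (fun _ _ => Nat.zero_le _) (hTS hi)
      have h2 := (Finset.mem_filter.1 hi).2
      omega
    have ha : ∑ i ∈ T, a i ≤ ∑ i ∈ S, a i := Finset.sum_le_sum_of_subset hTS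
    have he : ∑ i ∈ T, e i ≤ E := Finset.sum_le_sum_of_subset hTS
    have hcE : 2 * E ≤ T.card * E := Nat.mul_le_mul_right E hc
    omega

/-- The combinatorial decomposition used in the induction step: if `α ∈ ℕ^k` has
total degree `∑_{i=1}^{s} (d_i - 1)` and satisfies `α_i ≤ ∑_{j ≤ s, j ≠ i} (d_j - 1)`
for every `i ≤ s`, then `α = ᾱ + α̃` where `α̃` has total degree `d_s - 1` with
vanishing `s`-th coordinate, and `ᾱ` satisfies the analogous conditions for `s - 1`.
(Indices are `0`-based: the players `1, …, s` of the informal statement correspond to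
indices `0, …, s-1`, the `s`-th player being index `s - 1`.) -/
theorem exists_decomposition_of_support_conditions (k s : ℕ) (hs : 2 ≤ s) (hsk : s ≤ k)
    (d : ℕ → ℕ) (hd : ∀ i ∈ Finset.range s, 1 ≤ d i) (α : ℕ → ℕ)
    (hsum : ∑ u ∈ Finset.range k, α u = ∑ i ∈ Finset.range s, (d i - 1))
    (hle : ∀ i ∈ Finset.range s, α i ≤ ∑ j ∈ (Finset.range s).erase i, (d j - 1)) :
    ∃ αbar αtil : ℕ → ℕ,
      (∀ u, α u = αbar u + αtil u) ∧
      (∑ u ∈ Finset.range k, αtil u = d (s - 1) - 1) ∧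
      αtil (s - 1) = 0 ∧
      (∑ u ∈ Finset.range k, αbar u = ∑ i ∈ Finset.range (s - 1), (d i - 1)) ∧
      ∀ i ∈ Finset.range (s - 1),
        αbar i ≤ ∑ j ∈ (Finset.range (s - 1)).erase i, (d j - 1) := by
  obtain ⟨n, rfl⟩ : ∃ n, s = n + 1 := ⟨s - 1, by omega⟩
  simp only [Nat.add_sub_cancel]
  set e : ℕ → ℕ := fun i => d i - 1 with he
  change ∑ u ∈ range k, α u = ∑ i ∈ range (n + 1), e i at hsum
  change ∀ i ∈ range (n + 1), α i ≤ ∑ j ∈ (range (n + 1)).erase i, e j at hle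
  change ∃ αbar αtil : ℕ → ℕ, (∀ u, α u = αbar u + αtil u) ∧
      (∑ u ∈ range k, αtil u = e n) ∧ αtil n = 0 ∧
      (∑ u ∈ range k, αbar u = ∑ i ∈ range n, e i) ∧
      ∀ i ∈ range n, αbar i ≤ ∑ j ∈ (range n).erase i, e j
  set E := ∑ i ∈ range n, e i with hE
  rw [Finset.sum_range_succ, ← hE] at hsum
  have herase : ∀ i ∈ range n, ∑ j ∈ (range n).erase i, e j = E - e i := fun i hi => by
    have := Finset.add_sum_erase (range n) e hi
    omega
  have hle' : ∀ i ∈ range n, α i ≤ (E - e i) + e n := fun i hi => by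
    have h1 := Finset.add_sum_erase (range (n + 1)) e
      (Finset.mem_range.2 (by have := Finset.mem_range.1 hi; omega) : i ∈ range (n + 1))
    rw [Finset.sum_range_succ, ← hE] at h1
    have h2 := hle i (Finset.mem_range.2 (by have := Finset.mem_range.1 hi; omega))
    have h3 : e i ≤ E := Finset.single_le_sum (fun _ _ => Nat.zero_le _) hi
    omega
  have hlast : α n ≤ E := by
    have h1 := Finset.add_sum_erase (range (n + 1)) e (Finset.self_mem_range_succ n)
    rw [Finset.sum_range_succ, ← hE] at h1
    have h2 := hle n (Finset.self_mem_range_succ n)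
    omega
  have hnk : n ∈ range k := Finset.mem_range.2 (by omega)
  have hsub : range n ⊆ (range k).erase n := fun i hi => by
    simp only [Finset.mem_range, Finset.mem_erase] at hi ⊢
    omega
  set l : ℕ → ℕ := fun u => if u ∈ range n then α u - (E - e u) else 0 with hl
  have hlsum : ∑ u ∈ (range k).erase n, l u ≤ e n := by
    rw [← Finset.sum_subset hsub fun i _ hi => if_neg hi,
      Finset.sum_congr rfl fun i hi => if_pos hi]
    refine sum_truncated_excess_le (range n) e α (e n) ?_ hle'
    rw [← hE, ← hsum]
    exact Finset.sum_le_sum_of_subset (hsub.trans (Finset.erase_subset _ _))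
  have hα := Finset.add_sum_erase (range k) α hnk
  obtain ⟨t, ht, htS, htsum⟩ := exists_between_with_sum ((range k).erase n) l α
    (fun u => by simp only [hl]; split_ifs <;> omega) (e n) hlsum (by omega)
  have htn : t n = 0 := by rw [htS n (by simp)]; simp [hl]
  have htk : ∑ u ∈ range k, t u = e n := by
    rw [← Finset.add_sum_erase (range k) t hnk, htn, htsum, zero_add]
  have hadd : ∀ u, α u = (α u - t u) + t u := fun u => by have := (ht u).2; omega
  refine ⟨fun u => α u - t u, t, hadd, htk, htn, ?_, fun i hi => ?_⟩
  · have h : ∑ u ∈ range k, α u = ∑ u ∈ range k, (α u - t u) + ∑ u ∈ range k, t u := by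
      rw [← Finset.sum_add_distrib]
      exact Finset.sum_congr rfl fun u _ => hadd u
    change ∑ u ∈ range k, (α u - t u) = E
    omega
  · rw [herase i hi]
    have h := (ht i).1
    simp only [hl, if_pos hi] at h
    change α i - t i ≤ _
    omega
end

section
/- Let k ≥ 1 and let 𝒮 ⊆ {1, …, k}. For each i ∈ 𝒮 let d_i be a positive integer, and set n_i := 1 and S_i := d_i. For each i ∉ 𝒮 let n_i ≥ 2 be an integer and let d_{i,1}, …, d_{i,n_i} be positive integers, and set S_i := ∑_{j=1}^{n_i} d_{i,j}. Let n := ∑_{i=1}^k n_i. In ℤ[x_1, …, x_k], define the polynomial P := ∏_{i ∈ 𝒮} (∑_{u ≠ i} x_u)^{d_i − 1} · ∏_{i ∉ 𝒮} ∏_{j=1}^{n_i} ( ∑_{l=0}^{d_{i,j} − 1} x_i^{l} · (x_1 + ⋯ + x_k)^{d_{i,j} − 1 − l} ). Then the support of P is exactly the set of all α ∈ ℕ^k such that ∑_{u=1}^k α_u = ∑_{l=1}^k S_l − n and, for every i ∈ 𝒮, α_i ≤ ∑_{l=1}^k S_l − n + 1 − d_i. -/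
open MvPolynomial Finset

/-!
The polynomial is a product of forms with nonnegative coefficients, so no cancellation occurs and
an exponent `α` is in the support exactly when it is a sum of exponents of the factors.  A factor
`(∑_{u ≠ i} x_u)^{d_i - 1}` contributes every exponent of degree `d_i - 1` that avoids `i`, and each
of the remaining factors contributes every exponent of its degree (already the summand `l = 0` does).

Necessity: `P` is homogeneous of degree `M = ∑ S_l - N`, and `P` is the product of a form of degree
`d_i - 1` free of `x_i` and a form of degree `M - (d_i - 1)`.

Sufficiency is a transportation problem: find a nonnegative integer matrix with zero diagonal, whose
rows are indexed by the isolated vertices together with one extra row for all the unrestricted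
factors, with prescribed row sums and with column sums `α`.  `exists_offDiag_matrix` shows that such
a matrix exists as soon as the row and column sums at each index add up to at most the total.
-/

/-! ### Matrices with zero diagonal and prescribed margins -/

/-- Row sums `b` and column sums `a` of the same total `M` are realised by a matrix of naturals with
zero diagonal provided `a v + b v ≤ M` for all `v`.  One unit is removed at a time, at an entry whose
row or column is an index `p` maximising `a + b`; since the `a v + b v` sum to `2 M`, at most two
indices can be tight, and if there are two then nothing else is nonzero. -/
lemma exists_offDiag_matrix {ι : Type*} [Fintype ι] [DecidableEq ι] (M : ℕ) :
    ∀ a b : ι → ℕ, ∑ v, a v = M → ∑ v, b v = M → (∀ v, a v + b v ≤ M) →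
      ∃ m : ι → ι → ℕ, (∀ i, m i i = 0) ∧ (∀ i, ∑ u, m i u = b i) ∧ ∀ u, ∑ i, m i u = a u := by
  induction M with
  | zero =>
    intro a b ha hb h
    refine ⟨fun _ _ => 0, fun _ => rfl, fun i => ?_, fun i => ?_⟩ <;>
    · have := h i
      simp
      omega
  | succ M ih =>
    intro a b ha hb h
    -- it suffices to find a column `u` and a row `s` that together meet every tight index
    suffices H : ∃ u s, u ≠ s ∧ 0 < a u ∧ 0 < b s ∧
        ∀ q, q ≠ u → q ≠ s → a q + b q ≤ M by
      obtain ⟨u, s, hus, hu, hs, hq⟩ := H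
      have hsub : ∀ (f : ι → ℕ) (t : ι), 0 < f t →
          f = fun v => (f v - if v = t then 1 else 0) + if v = t then 1 else 0 := by
        intro f t ht
        funext v
        by_cases hv : v = t
        · subst hv; simp; omega
        · simp [hv]
      have hsum : ∀ (f : ι → ℕ) (t : ι), 0 < f t → ∑ v, f v = M + 1 →
          ∑ v, (f v - if v = t then 1 else 0) = M := by
        intro f t ht hf
        rw [hsub f t ht, sum_add_distrib] at hf
        simp only [sum_ite_eq', mem_univ, if_true] at hf
        omega
      obtain ⟨m, h0, hrow, hcol⟩ := ih (fun v => a v - if v = u then 1 else 0)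
        (fun v => b v - if v = s then 1 else 0) (hsum a u hu ha) (hsum b s hs hb) (by
          intro v
          have := h v
          by_cases h1 : v = u
          · subst h1; simp [hus]; omega
          · by_cases h2 : v = s
            · subst h2; simp [h1]; omega
            · have := hq v h1 h2
              simp [h1, h2]; omega)
      refine ⟨fun i v => m i v + if i = s ∧ v = u then 1 else 0, fun i => ?_, fun i => ?_,
        fun v => ?_⟩
      · have : ¬ (i = s ∧ i = u) := fun ⟨h1, h2⟩ => hus (h2.symm.trans h1)
        simp [h0, this]
      · rw [sum_add_distrib, hrow]
        conv_rhs => rw [hsub b s hs]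
        by_cases hi : i = s <;> simp [hi]
      · rw [sum_add_distrib, hcol]
        conv_rhs => rw [hsub a u hu]
        by_cases hi : v = u <;> simp [hi]
    have hne : (univ : Finset ι).Nonempty := by
      rw [Finset.nonempty_iff_ne_empty]
      intro h0
      rw [h0] at ha
      simp at ha
    obtain ⟨p, -, hp⟩ := exists_max_image univ (fun v => a v + b v) hne
    have htot : ∑ v, (a v + b v) = 2 * (M + 1) := by rw [sum_add_distrib, ha, hb]; ring
    have hppos : 0 < a p + b p := by
      by_contra hc
      have : ∑ v, (a v + b v) = 0 := sum_eq_zero fun v _ => by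
        have := hp v (mem_univ v)
        omega
      omega
    -- a tight index other than `p` is the only other index carrying any weight
    have key : ∀ t, t ≠ p → 0 < a t + b t → ∀ q, q ≠ p → q ≠ t → a q + b q ≤ M := by
      intro t htp ht q hqp hqt
      by_contra hc
      have h1 := hp q (mem_univ q)
      have h2 : ∑ v ∈ {p, q, t}, (a v + b v) ≤ ∑ v, (a v + b v) :=
        sum_le_sum_of_subset (subset_univ _)
      rw [sum_insert (by simp [hqp.symm, htp.symm]), sum_insert (by simp [hqt]),
        sum_singleton] at h2
      omega
    have other : ∀ f : ι → ℕ, ∑ v, f v = M + 1 → f p < M + 1 → ∃ t, t ≠ p ∧ 0 < f t := by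
      intro f hf hlt
      by_contra! hc
      have : ∑ v, f v = f p := sum_eq_single p
        (fun v _ hv => by have := hc v hv; omega) (by simp)
      omega
    have hpM := h p
    by_cases hap : 0 < a p
    · obtain ⟨s, hsp, hs⟩ := other b hb (by omega)
      exact ⟨p, s, hsp.symm, hap, hs, fun q h1 h2 => key s hsp (by omega) q h1 h2⟩
    · obtain ⟨u, hup, hu⟩ := other a ha (by omega)
      exact ⟨u, p, hup, hu, by omega, fun q h1 h2 => key u hup (by omega) q h2 h1⟩

/-! ### Polynomials with nonnegative coefficients -/

/-- The subsemiring of integer polynomials all of whose coefficients are nonnegative. -/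
def nonnegCoeff (σ : Type*) : Subsemiring (MvPolynomial σ ℤ) where
  carrier := {p | ∀ m, 0 ≤ coeff m p}
  one_mem' := by
    classical
    intro m
    rw [coeff_one]
    split_ifs <;> simp
  zero_mem' := by intro m; simp
  add_mem' := by
    intro p q hp hq m
    rw [coeff_add]
    exact add_nonneg (hp m) (hq m)
  mul_mem' := by
    classical
    intro p q hp hq m
    rw [coeff_mul]
    exact sum_nonneg fun x _ => mul_nonneg (hp _) (hq _)

lemma X_mem_nonnegCoeff {σ : Type*} (u : σ) : (X u : MvPolynomial σ ℤ) ∈ nonnegCoeff σ := by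
  classical
  intro m
  rw [coeff_X]
  split_ifs <;> simp

/-- `HasExp p α`: the polynomial `p` has nonnegative coefficients and `α` lies in its support. -/
def HasExp {σ : Type*} (p : MvPolynomial σ ℤ) (α : σ →₀ ℕ) : Prop :=
  p ∈ nonnegCoeff σ ∧ 0 < coeff α p

lemma HasExp.mul {σ : Type*} {p q : MvPolynomial σ ℤ} {α β : σ →₀ ℕ}
    (hp : HasExp p α) (hq : HasExp q β) : HasExp (p * q) (α + β) := by
  classical
  refine ⟨mul_mem hp.1 hq.1, ?_⟩
  rw [coeff_mul]
  exact sum_pos' (fun x _ => mul_nonneg (hp.1 _) (hq.1 _))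
    ⟨(α, β), by simp, mul_pos hp.2 hq.2⟩

lemma hasExp_one {σ : Type*} : HasExp (1 : MvPolynomial σ ℤ) 0 := by
  classical
  exact ⟨one_mem _, by simp⟩

lemma HasExp.prod {σ ι : Type*} (s : Finset ι) (p : ι → MvPolynomial σ ℤ) (β : ι → σ →₀ ℕ)
    (h : ∀ i ∈ s, HasExp (p i) (β i)) : HasExp (∏ i ∈ s, p i) (∑ i ∈ s, β i) := by
  classical
  induction s using Finset.induction_on with
  | empty => simpa using hasExp_one
  | insert a s ha ih =>
    rw [prod_insert ha, sum_insert ha]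
    exact (h a (mem_insert_self _ _)).mul (ih fun i hi => h i (mem_insert_of_mem hi))

lemma HasExp.sum {σ ι : Type*} (s : Finset ι) (p : ι → MvPolynomial σ ℤ) (α : σ →₀ ℕ)
    (h : ∀ i ∈ s, p i ∈ nonnegCoeff σ) (i : ι) (hi : i ∈ s) (hpi : HasExp (p i) α) :
    HasExp (∑ i ∈ s, p i) α := by
  refine ⟨sum_mem h, ?_⟩
  rw [coeff_sum]
  exact sum_pos' (fun j hj => h j hj α) ⟨i, hi, hpi.2⟩

lemma sum_X_mem_nonnegCoeff {σ : Type*} (A : Finset σ) :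
    (∑ u ∈ A, X u : MvPolynomial σ ℤ) ∈ nonnegCoeff σ :=
  sum_mem fun u _ => X_mem_nonnegCoeff u

/-- Every exponent of degree `e` supported on `A` occurs in `(∑_{u ∈ A} x_u)^e`. -/
lemma hasExp_sum_X_pow {σ : Type*} [Fintype σ] (A : Finset σ) (e : ℕ) :
    ∀ β : σ →₀ ℕ, ∑ u, β u = e → (∀ u ∉ A, β u = 0) →
      HasExp ((∑ u ∈ A, X u : MvPolynomial σ ℤ) ^ e) β := by
  classical
  induction e with
  | zero =>
    intro β h _
    have : β = 0 := by
      ext u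
      simpa using (sum_eq_zero_iff.mp h) u (mem_univ u)
    subst this
    simpa using hasExp_one
  | succ e ih =>
    intro β h hA
    obtain ⟨u, -, hu⟩ : ∃ u ∈ univ, β u ≠ 0 := exists_ne_zero_of_sum_ne_zero (by omega)
    have huA : u ∈ A := by
      by_contra hc
      exact hu (hA u hc)
    have hle : Finsupp.single u 1 ≤ β := by
      rw [Finsupp.single_le_iff]
      omega
    have hβ : β - Finsupp.single u 1 + Finsupp.single u 1 = β := tsub_add_cancel_of_le hle
    rw [← hβ, pow_succ]
    refine (ih _ ?_ ?_).mul (HasExp.sum A _ _ (fun u _ => X_mem_nonnegCoeff u) u huA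
      ⟨X_mem_nonnegCoeff u, by simp⟩)
    · rw [← hβ] at h
      simp only [Finsupp.add_apply, sum_add_distrib] at h
      have h1 : ∑ v, (Finsupp.single u 1 : σ →₀ ℕ) v = 1 := by
        simp [Finsupp.single_apply]
      omega
    · intro v hv
      simp [hA v hv]

/-! ### Forms containing every monomial of their degree -/

/-- `HasAllExp p g`: the polynomial `p` has nonnegative coefficients and contains every monomial of
degree `g`. -/
def HasAllExp {σ : Type*} [Fintype σ] (p : MvPolynomial σ ℤ) (g : ℕ) : Prop :=
  ∀ β : σ →₀ ℕ, ∑ u, β u = g → HasExp p β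

lemma exists_split {σ : Type*} [Fintype σ] (a b : ℕ) :
    ∀ β : σ →₀ ℕ, ∑ u, β u = a + b →
      ∃ β₁ β₂ : σ →₀ ℕ, β = β₁ + β₂ ∧ ∑ u, β₁ u = a ∧ ∑ u, β₂ u = b := by
  classical
  induction a with
  | zero => exact fun β h => ⟨0, β, by simp, by simp, by simpa using h⟩
  | succ a ih =>
    intro β h
    obtain ⟨u, -, hu⟩ : ∃ u ∈ univ, β u ≠ 0 := exists_ne_zero_of_sum_ne_zero (by omega)
    have hle : Finsupp.single u 1 ≤ β := by
      rw [Finsupp.single_le_iff]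
      omega
    have hβ : β - Finsupp.single u 1 + Finsupp.single u 1 = β := tsub_add_cancel_of_le hle
    have h1 : ∑ v, (Finsupp.single u 1 : σ →₀ ℕ) v = 1 := by
      simp [Finsupp.single_apply]
    obtain ⟨β₁, β₂, h12, hs1, hs2⟩ := ih (β - Finsupp.single u 1) (by
      rw [← hβ] at h
      simp only [Finsupp.add_apply, sum_add_distrib] at h
      omega)
    refine ⟨β₁ + Finsupp.single u 1, β₂, ?_, ?_, hs2⟩
    · rw [← hβ, h12]
      abel
    · simp only [Finsupp.add_apply, sum_add_distrib]
      omega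

lemma HasAllExp.prod {σ ι : Type*} [Fintype σ] (s : Finset ι) (p : ι → MvPolynomial σ ℤ)
    (g : ι → ℕ) (h : ∀ i ∈ s, HasAllExp (p i) (g i)) :
    HasAllExp (∏ i ∈ s, p i) (∑ i ∈ s, g i) := by
  classical
  induction s using Finset.induction_on with
  | empty =>
    intro β hβ
    simpa using hasExp_sum_X_pow univ 0 β (by simpa using hβ) (by simp)
  | insert a s ha ih =>
    intro β hβ
    rw [sum_insert ha] at hβ
    obtain ⟨β₁, β₂, rfl, h1, h2⟩ := exists_split _ _ β hβ
    rw [prod_insert ha]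
    exact (h a (mem_insert_self _ _) β₁ h1).mul
      (ih (fun i hi => h i (mem_insert_of_mem hi)) β₂ h2)

lemma hasAllExp_factor {σ : Type*} [Fintype σ] (i : σ) (D : ℕ) (hD : 1 ≤ D) :
    HasAllExp (∑ l ∈ range D, (X i) ^ l * (∑ u, (X u : MvPolynomial σ ℤ)) ^ (D - 1 - l))
      (D - 1) := by
  intro β hβ
  refine HasExp.sum _ _ _ (fun l _ => mul_mem (pow_mem (X_mem_nonnegCoeff i) _)
    (pow_mem (sum_X_mem_nonnegCoeff _) _)) 0 (by simp; omega) ?_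
  simpa using hasExp_sum_X_pow univ (D - 1) β hβ (by simp)

/-! ### Homogeneity -/

lemma isHomogeneous_sum_X_pow {σ : Type*} (A : Finset σ) (e : ℕ) :
    ((∑ u ∈ A, X u : MvPolynomial σ ℤ) ^ e).IsHomogeneous e := by
  have h : (∑ u ∈ A, X u : MvPolynomial σ ℤ).IsHomogeneous 1 :=
    IsHomogeneous.sum A _ 1 fun u _ => isHomogeneous_X ℤ u
  simpa using h.pow e

lemma isHomogeneous_factor {σ : Type*} [Fintype σ] (i : σ) (D : ℕ) :
    (∑ l ∈ range D, (X i) ^ l *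
      (∑ u, (X u : MvPolynomial σ ℤ)) ^ (D - 1 - l)).IsHomogeneous (D - 1) := by
  refine IsHomogeneous.sum _ _ _ fun l hl => ?_
  have hl' := mem_range.mp hl
  have := (isHomogeneous_X_pow (R := ℤ) i l).mul
    (isHomogeneous_sum_X_pow (univ : Finset σ) (D - 1 - l))
  rwa [show l + (D - 1 - l) = D - 1 by omega] at this

lemma degreeOf_sum_X_erase_pow {σ : Type*} [Fintype σ] [DecidableEq σ] (i : σ) (e : ℕ) :
    degreeOf i ((∑ u ∈ univ.erase i, X u : MvPolynomial σ ℤ) ^ e) = 0 := by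
  have h : degreeOf i (∑ u ∈ univ.erase i, X u : MvPolynomial σ ℤ) = 0 := by
    refine Nat.le_zero.mp ((degreeOf_sum_le i _ _).trans (Finset.sup_le fun u hu => ?_))
    rw [degreeOf_X_of_ne (ne_of_mem_erase hu).symm]
  have := degreeOf_pow_le i (∑ u ∈ univ.erase i, X u : MvPolynomial σ ℤ) e
  rw [h] at this
  omega

/-! ### The support of the class polynomial -/

/-- Support of the Chow class polynomial of a generic Nash CI variety of a cluster
graph.  Here `𝒮` is the set of isolated vertices (cliques with one player `i`, having
`d i` strategies, `n i = 1`), each non-isolated clique `i` has `n i ≥ 2` players with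
strategy numbers `dd i 0, …, dd i (n i - 1)`, `S i` is the sum of the strategy numbers
in the `i`-th clique and `N = ∑ n i` the total number of players.  The support of
`P = ∏_{i ∈ 𝒮} (∑_{u ≠ i} x_u)^{d_i-1} ·
     ∏_{i ∉ 𝒮} ∏_j (∑_{l=0}^{d_{i,j}-1} x_i^l (x_1+⋯+x_k)^{d_{i,j}-1-l})`
is exactly the set of `α` of total degree `∑ S_l - N` with
`α_i ≤ ∑ S_l - N + 1 - d_i` for every `i ∈ 𝒮`. -/
theorem support_nash_ci_class_poly (k : ℕ) (hk : 1 ≤ k) (𝒮 : Finset (Fin k))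
    (d : Fin k → ℕ) (n : Fin k → ℕ) (dd : Fin k → ℕ → ℕ)
    (hd : ∀ i ∈ 𝒮, 1 ≤ d i)
    (hn1 : ∀ i ∈ 𝒮, n i = 1)
    (hn2 : ∀ i ∉ 𝒮, 2 ≤ n i)
    (hdd : ∀ i ∉ 𝒮, ∀ j < n i, 1 ≤ dd i j) :
    let S : Fin k → ℕ := fun i =>
      if i ∈ 𝒮 then d i else ∑ j ∈ Finset.range (n i), dd i j
    let N : ℕ := ∑ i, n i
    let P : MvPolynomial (Fin k) ℤ :=
      (∏ i ∈ 𝒮, (∑ u ∈ Finset.univ.erase i, X u) ^ (d i - 1)) *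
        ∏ i ∈ 𝒮ᶜ, ∏ j ∈ Finset.range (n i),
          ∑ l ∈ Finset.range (dd i j),
            (X i) ^ l * (∑ u, (X u : MvPolynomial (Fin k) ℤ)) ^ (dd i j - 1 - l)
    ∀ α : Fin k →₀ ℕ,
      α ∈ P.support ↔
        (∑ u, α u = ∑ l, S l - N) ∧
          ∀ i ∈ 𝒮, α i ≤ ∑ l, S l - N + 1 - d i := by
  intro S N P α
  set E : ℕ := ∑ i ∈ 𝒮, (d i - 1) with hE
  set F : ℕ := ∑ i ∈ 𝒮ᶜ, ∑ j ∈ range (n i), (dd i j - 1) with hF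
  set Q : MvPolynomial (Fin k) ℤ := ∏ i ∈ 𝒮ᶜ, ∏ j ∈ Finset.range (n i),
          ∑ l ∈ Finset.range (dd i j),
            (X i) ^ l * (∑ u, (X u : MvPolynomial (Fin k) ℤ)) ^ (dd i j - 1 - l) with hQ
  have hM : ∑ l, S l - N = E + F := by
    have h1 : ∑ l, S l = N + (E + F) := by
      simp only [N, hE, hF]
      rw [← sum_add_sum_compl 𝒮 S, ← sum_add_sum_compl 𝒮 n]
      have h2 : ∑ i ∈ 𝒮, S i = ∑ i ∈ 𝒮, n i + ∑ i ∈ 𝒮, (d i - 1) := by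
        rw [← sum_add_distrib]
        refine sum_congr rfl fun i hi => ?_
        have := hd i hi
        simp only [S, if_pos hi, hn1 i hi]
        omega
      have h3 : ∑ i ∈ 𝒮ᶜ, S i =
          ∑ i ∈ 𝒮ᶜ, n i + ∑ i ∈ 𝒮ᶜ, ∑ j ∈ range (n i), (dd i j - 1) := by
        rw [← sum_add_distrib]
        refine sum_congr rfl fun i hi => ?_
        have hi' : i ∉ 𝒮 := by simpa using hi
        simp only [S, if_neg hi']
        have h4 : n i = ∑ j ∈ range (n i), 1 := by simp
        conv_rhs => enter [1]; rw [h4]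
        rw [← sum_add_distrib]
        refine sum_congr rfl fun j hj => ?_
        have := hdd i hi' j (mem_range.mp hj)
        omega
      rw [h2, h3]
      ring
    omega
  rw [hM, mem_support_iff]
  have hQhom : Q.IsHomogeneous F :=
    IsHomogeneous.prod _ _ _ fun i _ => IsHomogeneous.prod _ _ _ fun j _ =>
      isHomogeneous_factor i (dd i j)
  constructor
  · intro hα
    have hP : P.IsHomogeneous (E + F) :=
      (IsHomogeneous.prod _ _ _ fun i _ => isHomogeneous_sum_X_pow _ (d i - 1)).mul hQhom
    refine ⟨?_, fun i hi => ?_⟩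
    · rw [← Finsupp.degree_eq_sum, Finsupp.degree_eq_weight_one]
      exact hP hα
    · have hfac : P = (∑ u ∈ univ.erase i, X u) ^ (d i - 1) *
          ((∏ i ∈ 𝒮.erase i, (∑ u ∈ univ.erase i, X u) ^ (d i - 1)) * Q) := by
        rw [← mul_assoc, mul_prod_erase 𝒮
          (fun i => (∑ u ∈ univ.erase i, (X u : MvPolynomial (Fin k) ℤ)) ^ (d i - 1)) hi]
      have hR : ((∏ i ∈ 𝒮.erase i, (∑ u ∈ univ.erase i,
          (X u : MvPolynomial (Fin k) ℤ)) ^ (d i - 1)) * Q).IsHomogeneous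
            (∑ i ∈ 𝒮.erase i, (d i - 1) + F) :=
        (IsHomogeneous.prod _ _ _ fun i _ => isHomogeneous_sum_X_pow _ (d i - 1)).mul hQhom
      have h1 := monomial_le_degreeOf i (mem_support_iff.mpr hα)
      rw [hfac] at h1
      have h2 := h1.trans (degreeOf_mul_le i _ _)
      rw [degreeOf_sum_X_erase_pow] at h2
      have h3 := (degreeOf_le_totalDegree _ i).trans hR.totalDegree_le
      have h4 : (d i - 1) + ∑ i ∈ 𝒮.erase i, (d i - 1) = E :=
        add_sum_erase 𝒮 (fun i => d i - 1) hi
      have := hd i hi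
      omega
  · rintro ⟨hα, hle⟩
    -- the index `none` stands for all the unrestricted factors together
    obtain ⟨m, h0, hrow, hcol⟩ := exists_offDiag_matrix (ι := Option (Fin k)) (E + F)
      (fun v => v.elim 0 α) (fun v => v.elim F fun i => if i ∈ 𝒮 then d i - 1 else 0)
      (by rw [Fintype.sum_option]; simpa using hα)
      (by rw [Fintype.sum_option]; simp [hE, sum_ite_mem, add_comm])
      (by
        rintro (_ | i)
        · simp
        · simp only [Option.elim]
          split_ifs with hi
          · have h1 := hle i hi
            have h2 : d i - 1 ≤ E := single_le_sum_of_canonicallyOrdered (f := fun i => d i - 1) hi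
            have := hd i hi
            omega
          · rw [← hα]
            exact single_le_sum_of_canonicallyOrdered (f := fun u => α u) (mem_univ i))
    have hnone : ∀ v, m v none = 0 := by
      intro v
      have := hcol none
      simp only [Option.elim] at this
      exact sum_eq_zero_iff.mp this v (mem_univ v)
    have hrow' : ∀ v, ∑ u, m v (some u) = v.elim F fun i => if i ∈ 𝒮 then d i - 1 else 0 := by
      intro v
      rw [← hrow v, Fintype.sum_option, hnone, zero_add]
    set β : Option (Fin k) → Fin k →₀ ℕ :=
      fun v => Finsupp.equivFunOnFinite.symm fun u => m v (some u) with hβ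
    have hdecomp : α = ∑ i ∈ 𝒮, β (some i) + β none := by
      ext u
      have h1 := hcol (some u)
      rw [Fintype.sum_option] at h1
      simp only [Option.elim] at h1
      rw [Finsupp.add_apply, Finsupp.finsetSum_apply, ← h1, add_comm]
      congr 1
      symm
      refine sum_subset (subset_univ _) fun i _ hi => ?_
      have h2 := hrow' (some i)
      simp only [Option.elim, if_neg hi] at h2
      exact sum_eq_zero_iff.mp h2 u (mem_univ u)
    have hpos : HasExp P α := by
      rw [hdecomp]
      refine HasExp.mul (HasExp.prod _ _ _ fun i hi => ?_) ?_
      · refine hasExp_sum_X_pow _ _ _ ?_ ?_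
        · have h2 := hrow' (some i)
          simp only [Option.elim, if_pos hi] at h2
          exact h2
        · intro u hu
          have : u = i := by simpa using hu
          subst this
          exact h0 (some u)
      · have hall : HasAllExp Q F := HasAllExp.prod _ _ _ fun i hi =>
          HasAllExp.prod _ _ _ fun j hj =>
          hasAllExp_factor i (dd i j) (hdd i (by simpa using hi) j (mem_range.mp hj))
        exact hall _ (hrow' none)
    exact hpos.2.ne'
end

section
/- Let d_1, d_2, d_3 be positive integers. In the polynomial ring ℤ[x_1, x_2], the coefficient of the monomial x_1^{d_1 − 1} · x_2^{d_2 d_3 − 1} in the polynomial (x_1 + x_2)^{d_2 d_3 − d_2 − d_3 + 1} · x_2^{d_1 − 1} · ( ∑_{l=0}^{d_2 − 1} x_2^{l} (x_1 + x_2)^{d_2 − 1 − l} ) · ( ∑_{l=0}^{d_3 − 1} x_2^{l} (x_1 + x_2)^{d_3 − 1 − l} ) equals C(d_2 d_3 + 1, d_1 + 1) − C(d_2 d_3 − d_2 + 1, d_1 + 1) − C(d_2 d_3 − d_3 + 1, d_1 + 1) + C(d_2 d_3 − d_2 − d_3 + 1, d_1 + 1), where C(a, b) denotes the binomial coefficient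 (with the convention C(a, b) = 0 when b > a). -/
/-!
Write `Y = x_1 + x_2`. The geometric sums satisfy
`x_1 · ∑_{l<d} x_2^l Y^{d-1-l} = Y^d - x_2^d`, so multiplying the polynomial by `x_1^2` turns it into
`Y^{d_2 d_3 - d_2 - d_3 + 1} x_2^{d_1-1} (Y^{d_2} - x_2^{d_2}) (Y^{d_3} - x_2^{d_3})`,
a signed sum of four terms `Y^n x_2^m` with `n + m = d_1 + d_2 d_3`. The coefficient sought is that of
`x_1^{d_1+1} x_2^{d_2 d_3 - 1}` in this product, and by the binomial theorem
(`coeff_add_pow_mul_X_pow`) each term contributes `C(n, d_1 + 1)`.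
-/

open MvPolynomial Finset

/-- In total degree `n + m = a + b` this holds without assuming `m ≤ b`: if `b < m`, then `n < a`
and both sides vanish. -/
lemma coeff_add_pow_mul_X_pow (n m a b : ℕ) (h : n + m = a + b) :
    MvPolynomial.coeff (Finsupp.single (0 : Fin 2) a + Finsupp.single (1 : Fin 2) b)
      ((X 0 + X 1 : MvPolynomial (Fin 2) ℤ) ^ n * X 1 ^ m) = (n.choose a : ℤ) := by
  have key : ∀ k ∈ Finset.range (n + 1),
      MvPolynomial.coeff (Finsupp.single (0 : Fin 2) a + Finsupp.single (1 : Fin 2) b)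
        ((X 0 : MvPolynomial (Fin 2) ℤ) ^ k * X 1 ^ (n - k) * (n.choose k : MvPolynomial (Fin 2) ℤ)
          * X 1 ^ m) = if k = a then (n.choose a : ℤ) else 0 := by
    intro k hk
    have hk' : k ≤ n := by simpa [Nat.lt_succ_iff] using hk
    have e : (X 0 : MvPolynomial (Fin 2) ℤ) ^ k * X 1 ^ (n - k)
        * (n.choose k : MvPolynomial (Fin 2) ℤ) * X 1 ^ m
        = monomial (Finsupp.single (0 : Fin 2) k + Finsupp.single (1 : Fin 2) (n - k + m))
            (n.choose k : ℤ) := by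
      have : (n.choose k : MvPolynomial (Fin 2) ℤ) = C (n.choose k : ℤ) := by simp
      rw [this, X_pow_eq_monomial, X_pow_eq_monomial, X_pow_eq_monomial, C_apply]
      simp only [monomial_mul, add_zero, one_mul, mul_one, Finsupp.single_add, add_assoc]
    rw [e, coeff_monomial]
    by_cases hka : k = a
    · subst hka
      have : n - k + m = b := by omega
      simp [this]
    · rw [if_neg hka, if_neg]
      intro hc
      have := DFunLike.congr_fun hc 0
      simp at this
      exact hka this
  rw [add_pow, Finset.sum_mul, coeff_sum, Finset.sum_congr rfl key, Finset.sum_ite_eq']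
  split_ifs with ha
  · rfl
  · rw [Nat.choose_eq_zero_of_lt (by simpa using ha)]
    simp

lemma X_mul_geom_sum (d : ℕ) :
    (∑ l ∈ Finset.range d, (X 1 : MvPolynomial (Fin 2) ℤ) ^ l * (X 0 + X 1) ^ (d - 1 - l)) * X 0
      = (X 0 + X 1) ^ d - X 1 ^ d := by
  have := geom_sum₂_mul (X 1 : MvPolynomial (Fin 2) ℤ) (X 0 + X 1) d
  linear_combination -this

/-- Degree of the Nash CI variety of a generic `d_1 × d_2 × d_3` game for the
three-vertex graph whose only edge joins players `2` and `3`: the coefficient of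
`x_1^{d_1-1} x_2^{d_2 d_3 - 1}` in
`(x_1+x_2)^{d_2 d_3 - d_2 - d_3 + 1} · x_2^{d_1-1} ·
 (∑_{l=0}^{d_2-1} x_2^l (x_1+x_2)^{d_2-1-l}) · (∑_{l=0}^{d_3-1} x_2^l (x_1+x_2)^{d_3-1-l})`
equals
`C(d_2 d_3 + 1, d_1 + 1) − C(d_2 d_3 − d_2 + 1, d_1 + 1)
 − C(d_2 d_3 − d_3 + 1, d_1 + 1) + C(d_2 d_3 − d_2 − d_3 + 1, d_1 + 1)`.
(The exponent and the last binomial argument `d_2 d_3 − d_2 − d_3 + 1` are written as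
`d_2 * d_3 + 1 - d_2 - d_3`, which avoids any truncation of natural subtraction since
`d_2 d_3 + 1 ≥ d_2 + d_3`.) -/
theorem degree_nash_ci_one_edge_three_players (d1 d2 d3 : ℕ)
    (h1 : 1 ≤ d1) (h2 : 1 ≤ d2) (h3 : 1 ≤ d3) :
    MvPolynomial.coeff
        (Finsupp.single (0 : Fin 2) (d1 - 1) + Finsupp.single (1 : Fin 2) (d2 * d3 - 1))
        (((X 0 + X 1 : MvPolynomial (Fin 2) ℤ)) ^ (d2 * d3 + 1 - d2 - d3) *
          (X 1) ^ (d1 - 1) *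
          (∑ l ∈ Finset.range d2, (X 1) ^ l * (X 0 + X 1) ^ (d2 - 1 - l)) *
          (∑ l ∈ Finset.range d3, (X 1) ^ l * (X 0 + X 1) ^ (d3 - 1 - l))) =
      ((d2 * d3 + 1).choose (d1 + 1) : ℤ) -
        ((d2 * d3 - d2 + 1).choose (d1 + 1) : ℤ) -
        ((d2 * d3 - d3 + 1).choose (d1 + 1) : ℤ) +
        ((d2 * d3 + 1 - d2 - d3).choose (d1 + 1) : ℤ) := by
  have hle : d2 + d3 ≤ d2 * d3 + 1 := by nlinarith [Nat.mul_le_mul h2 h3]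
  have hd2 : d2 ≤ d2 * d3 := Nat.le_mul_of_pos_right _ h3
  have hd3 : d3 ≤ d2 * d3 := Nat.le_mul_of_pos_left _ h2
  rw [← coeff_mul_X _ (0 : Fin 2), ← coeff_mul_X _ (0 : Fin 2)]
  have hm : Finsupp.single (0 : Fin 2) (d1 - 1) + Finsupp.single (1 : Fin 2) (d2 * d3 - 1)
      + Finsupp.single 0 1 + Finsupp.single 0 1
      = Finsupp.single (0 : Fin 2) (d1 + 1) + Finsupp.single (1 : Fin 2) (d2 * d3 - 1) := by
    rw [show d1 + 1 = d1 - 1 + 1 + 1 by omega, Finsupp.single_add, Finsupp.single_add]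
    abel
  have hP : ∀ e m : ℕ, (X 0 + X 1 : MvPolynomial (Fin 2) ℤ) ^ e * X 1 ^ m *
          (∑ l ∈ Finset.range d2, (X 1) ^ l * (X 0 + X 1) ^ (d2 - 1 - l)) *
          (∑ l ∈ Finset.range d3, (X 1) ^ l * (X 0 + X 1) ^ (d3 - 1 - l)) * X 0 * X 0
      = (X 0 + X 1) ^ (e + d2 + d3) * X 1 ^ m - (X 0 + X 1) ^ (e + d3) * X 1 ^ (m + d2)
        - (X 0 + X 1) ^ (e + d2) * X 1 ^ (m + d3) + (X 0 + X 1) ^ e * X 1 ^ (m + d2 + d3) := by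
    intro e m
    calc _ = (X 0 + X 1 : MvPolynomial (Fin 2) ℤ) ^ e * X 1 ^ m *
          ((∑ l ∈ Finset.range d2, (X 1) ^ l * (X 0 + X 1) ^ (d2 - 1 - l)) * X 0) *
          ((∑ l ∈ Finset.range d3, (X 1) ^ l * (X 0 + X 1) ^ (d3 - 1 - l)) * X 0) := by ac_rfl
      _ = _ := by
        rw [X_mul_geom_sum, X_mul_geom_sum]
        generalize (X 0 + X 1 : MvPolynomial (Fin 2) ℤ) = Y
        ring
  rw [hm, hP, coeff_add, coeff_sub, coeff_sub,
    coeff_add_pow_mul_X_pow _ _ _ _ (by omega), coeff_add_pow_mul_X_pow _ _ _ _ (by omega),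
    coeff_add_pow_mul_X_pow _ _ _ _ (by omega), coeff_add_pow_mul_X_pow _ _ _ _ (by omega),
    show d2 * d3 + 1 - d2 - d3 + d2 + d3 = d2 * d3 + 1 by omega,
    show d2 * d3 + 1 - d2 - d3 + d3 = d2 * d3 - d2 + 1 by omega,
    show d2 * d3 + 1 - d2 - d3 + d2 = d2 * d3 - d3 + 1 by omega]
end
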